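/- Fix p > 0 and q > 0. For n > 0 let A_n and B_n be independent ℕ-valued random variables, Poisson-distributed with means np and nq respectively. Then as n → ∞, Pr(A_n = B_n − 1) ∼ (q/p)^{1/2} · e^{−n(√p − √q)²} / (2 (pq)^{1/4} √(πn)). (Near-tie asymptotic underlying Proposition 5 (pro_OP).) -/

import Mathlib

/-- The Poisson probability mass function with mean `l`: `f_l(a) = l^a e^{-l} / a!`. -/
noncomputable def poissonPMF (l : ℝ) (a : ℕ) : ℝ := l ^ a * Real.exp (-l) / (Nat.factorial a)

/-!
For Poisson means `l` and `m`, the probability that the second variable exceeds the first by `k` is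
`(m / l) ^ (k / 2) * exp (-(l + m)) * I_k (2 √(l m))`, where `I_k` is the modified Bessel function.
Expanding one of the two exponential factors of `exp (w ζ + w / ζ)` and applying Cauchy's formula to
the other gives `I_k z = (2π)⁻¹ ∫ exp (z cos t) cos (k t) dt` over a period. Laplace's method at the
peak `t = 0` then yields `I_k z ∼ exp z / √(2πz)`: the substitution `t = u / √z` turns
`exp (-z (1 - cos t))` into a function of `u` that tends to `exp (-u² / 2)` and is dominated by a
fixed Gaussian. Finally, `2 √(l m) - (l + m) = -(√l - √m)²`.
-/

open Asymptotics Filter MeasureTheory Metric Set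
open scoped Nat Real Topology

lemma hasSum_circleIntegral_of_summable_bound {ι E : Type*} [Countable ι]
    [NormedAddCommGroup E] [NormedSpace ℂ E] [CompleteSpace E] {f : ι → ℂ → E} {u : ι → ℝ}
    {c : ℂ} {R : ℝ} (hR : 0 ≤ R) (hf : ∀ i, ContinuousOn (f i) (sphere c R)) (hu : Summable u)
    (hfu : ∀ i, ∀ z ∈ sphere c R, ‖f i z‖ ≤ u i) :
    HasSum (fun i ↦ ∮ z in C(c, R), f i z) (∮ z in C(c, R), ∑' i, f i z) := by
  have hlim := (tendstoUniformlyOn_tsum hu hfu).tendsto_circleIntegral_of_continuousOn hR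
    (.of_forall fun t ↦ continuousOn_finsetSum t fun i _ ↦ hf i)
  refine hlim.congr fun t ↦ ?_
  exact circleIntegral.integral_fun_sum fun i _ ↦ (hf i).circleIntegrable hR

lemma circleIntegral_cexp_mul_div_pow (w : ℂ) (m : ℕ) :
    ∮ ζ in C(0, 1), Complex.exp (w * ζ) / ζ ^ (m + 1) = 2 * π * Complex.I * (w ^ m / m !) := by
  have hdiff : DifferentiableOn ℂ (fun ζ ↦ Complex.exp (w * ζ)) (closedBall 0 1) := by fun_prop
  have hcauchy := hdiff.diffContOnCl_ball subset_rfl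
    |>.circleIntegral_one_div_sub_center_pow_smul one_pos m
  simpa [iteratedDeriv_cexp_const_mul, div_eq_inv_mul, mul_assoc, mul_comm, mul_left_comm]
    using hcauchy

lemma hasSum_circleIntegral_cexp_mul_add_inv (k : ℕ) (w : ℂ) :
    HasSum (fun a : ℕ ↦ 2 * π * Complex.I * (w ^ (2 * a + k) / (a ! * (a + k)!)))
      (∮ ζ in C(0, 1), Complex.exp (w * (ζ + ζ⁻¹)) / ζ ^ (k + 1)) := by
  let f (a : ℕ) (ζ : ℂ) : ℂ := (w * ζ⁻¹) ^ a / a ! * (Complex.exp (w * ζ) / ζ ^ (k + 1))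
  have hne {ζ : ℂ} (hζ : ζ ∈ sphere (0 : ℂ) 1) : ζ ≠ 0 := ne_of_mem_sphere hζ one_ne_zero
  have hf (a : ℕ) : ContinuousOn (f a) (sphere 0 1) := by
    fun_prop (disch := simp +contextual [hne])
  have hbound (a : ℕ) (ζ : ℂ) (hζ : ζ ∈ sphere (0 : ℂ) 1) :
      ‖f a ζ‖ ≤ ‖w‖ ^ a / a ! * Real.exp ‖w‖ := by
    have hnorm : ‖ζ‖ = 1 := by simpa using hζ
    have hexp : ‖Complex.exp (w * ζ)‖ ≤ Real.exp ‖w‖ := by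
      simpa [hnorm] using Complex.norm_exp_le_exp_norm (w * ζ)
    simp only [f, norm_mul, norm_div, norm_pow, norm_inv, hnorm, Complex.norm_natCast, inv_one,
      mul_one, one_pow, div_one]
    gcongr
  have hsum := hasSum_circleIntegral_of_summable_bound zero_le_one hf
    ((Real.summable_pow_div_factorial ‖w‖).mul_right _) hbound
  have hterm (a : ℕ) : ∮ ζ in C(0, 1), f a ζ =
      2 * π * Complex.I * (w ^ (2 * a + k) / (a ! * (a + k)!)) := by
    have hcoeff (ζ : ℂ) : f a ζ = w ^ a / a ! * (Complex.exp (w * ζ) / ζ ^ (a + k + 1)) := by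
      simp only [f]
      ring
    simp only [hcoeff, circleIntegral.integral_const_mul, circleIntegral_cexp_mul_div_pow]
    ring
  have htsum (ζ : ℂ) :
      ∑' a : ℕ, f a ζ = Complex.exp (w * (ζ + ζ⁻¹)) / ζ ^ (k + 1) := by
    have hexp : ∑' a : ℕ, (w * ζ⁻¹) ^ a / a ! = Complex.exp (w * ζ⁻¹) := by
      rw [Complex.exp_eq_exp_ℂ, NormedSpace.exp_eq_tsum_div]
    simp only [f, tsum_mul_right, hexp, mul_add, Complex.exp_add]
    ring
  simpa only [hterm, htsum] using hsum

lemma circleIntegral_cexp_mul_add_inv (k : ℕ) (w : ℂ) :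
    ∮ ζ in C(0, 1), Complex.exp (w * (ζ + ζ⁻¹)) / ζ ^ (k + 1) =
      Complex.I * ∫ t in -π..π, Complex.exp (2 * w * Complex.cos t - k * t * Complex.I) := by
  have hper : Function.Periodic
      (fun t : ℝ ↦ Complex.exp (2 * w * Complex.cos t - k * t * Complex.I)) (2 * π) := by
    intro t
    refine Complex.exp_eq_exp_iff_exists_int.2 ⟨-k, ?_⟩
    push_cast
    rw [Complex.cos_add_two_pi]
    ring
  have hshift := hper.intervalIntegral_add_eq (-π) 0
  rw [show -π + 2 * π = π by ring, zero_add] at hshift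
  rw [hshift, circleIntegral, ← intervalIntegral.integral_const_mul]
  congr 1 with t
  have hζ : circleMap 0 1 t = Complex.exp (t * Complex.I) := by simp [circleMap]
  have hcos : Complex.exp (t * Complex.I) + (Complex.exp (t * Complex.I))⁻¹ =
      2 * Complex.cos t := by
    rw [← Complex.exp_neg, ← neg_mul, Complex.two_cos]
  rw [deriv_circleMap, hζ, hcos, Complex.exp_sub, smul_eq_mul, mul_assoc (k : ℂ),
    Complex.exp_nat_mul, pow_succ]
  field_simp

/-- The modified Bessel function of the first kind `I_k`, for orders `k ∈ ℕ` and real arguments,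
given by its power series. -/
noncomputable def besselI (k : ℕ) (z : ℝ) : ℝ :=
  ∑' a : ℕ, (z / 2) ^ (2 * a + k) / (a ! * (a + k)!)

theorem besselI_eq_integral (k : ℕ) (z : ℝ) :
    besselI k z = (2 * π)⁻¹ * ∫ t in -π..π, Real.exp (z * Real.cos t) * Real.cos (k * t) := by
  let J (t : ℝ) : ℂ := Complex.exp (2 * (z / 2 : ℝ) * Complex.cos t - k * t * Complex.I)
  have hJre (t : ℝ) : (J t).re = Real.exp (z * Real.cos t) * Real.cos (k * t) := by
    simp [J, Complex.exp_re, ← Complex.ofReal_cos, mul_div_cancel₀]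
  have hJint : IntervalIntegrable J volume (-π) π :=
    Continuous.intervalIntegrable (by fun_prop) _ _
  have hre : (∫ t in -π..π, J t).re = ∫ t in -π..π, (J t).re :=
    (Complex.reCLM.intervalIntegral_comp_comm hJint).symm
  have hsum := (hasSum_circleIntegral_cexp_mul_add_inv k (z / 2 : ℝ)).mul_left
    (2 * π * Complex.I)⁻¹
  rw [circleIntegral_cexp_mul_add_inv] at hsum
  have hval : (2 * π * Complex.I)⁻¹ * (Complex.I * ∫ t in -π..π, J t) =
      ((2 * π)⁻¹ : ℝ) * ∫ t in -π..π, J t := by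
    push_cast
    field_simp
  rw [hval] at hsum
  have hsumre := Complex.hasSum_re hsum
  rw [Complex.re_ofReal_mul, hre] at hsumre
  simp only [hJre] at hsumre
  rw [← hsumre.tsum_eq, besselI]
  congr 1 with a
  rw [inv_mul_cancel_left₀ Complex.two_pi_I_ne_zero]
  norm_cast

section Laplace

lemma tendsto_div_sqrt_atTop_nhds_zero (u : ℝ) : Tendsto (fun x : ℝ ↦ u / √x) atTop (𝓝 0) :=
  tendsto_const_nhds.div_atTop Real.tendsto_sqrt_atTop

lemma mul_mul_div_sqrt_sq {x : ℝ} (hx : 0 < x) (c u : ℝ) : x * (c * (u / √x) ^ 2) = c * u ^ 2 := by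
  rw [div_pow, Real.sq_sqrt hx.le]
  field_simp

lemma tendsto_mul_comp_div_sqrt {ψ : ℝ → ℝ} {b : ℝ} (hψb : ψ ~[𝓝 0] fun t ↦ b * t ^ 2) (u : ℝ) :
    Tendsto (fun x ↦ x * ψ (u / √x)) atTop (𝓝 (b * u ^ 2)) := by
  have hequiv := (IsEquivalent.refl (u := fun x : ℝ ↦ x)).mul
    (hψb.comp_tendsto (tendsto_div_sqrt_atTop_nhds_zero u))
  refine hequiv.symm.tendsto_nhds (tendsto_const_nhds.congr' ?_)
  filter_upwards [eventually_gt_atTop 0] with x hx using (mul_mul_div_sqrt_sq hx b u).symm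

variable {E : Type*} [NormedAddCommGroup E] [NormedSpace ℝ E] {s : Set ℝ} {ψ : ℝ → ℝ} {g : ℝ → E}
  {b c M : ℝ}

lemma tendsto_indicator_exp_neg_mul_smul_comp_div_sqrt (hs₀ : s ∈ 𝓝 0)
    (hψb : ψ ~[𝓝 0] fun t ↦ b * t ^ 2) (hg₀ : ContinuousAt g 0) (u : ℝ) :
    Tendsto (fun x ↦ s.indicator (fun t ↦ Real.exp (-(x * ψ t)) • g t) (u / √x)) atTop
      (𝓝 (Real.exp (-b * u ^ 2) • g 0)) := by
  have hlim := (Real.continuous_exp.tendsto _).comp (tendsto_mul_comp_div_sqrt hψb u).neg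
    |>.smul (hg₀.tendsto.comp (tendsto_div_sqrt_atTop_nhds_zero u))
  rw [neg_mul]
  refine hlim.congr' ?_
  filter_upwards [(tendsto_div_sqrt_atTop_nhds_zero u).eventually hs₀] with x hx
  rw [indicator_of_mem hx, Function.comp_apply, Function.comp_apply]

lemma norm_indicator_exp_neg_mul_smul_comp_div_sqrt_le (hψc : ∀ t ∈ s, c * t ^ 2 ≤ ψ t)
    (hM : 0 ≤ M) (hgM : ∀ t ∈ s, ‖g t‖ ≤ M) {x : ℝ} (hx : 0 < x) (u : ℝ) :
    ‖s.indicator (fun t ↦ Real.exp (-(x * ψ t)) • g t) (u / √x)‖ ≤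
      Real.exp (-c * u ^ 2) * M := by
  by_cases hu : u / √x ∈ s
  · have hquad : c * u ^ 2 ≤ x * ψ (u / √x) := by
      grw [← hψc _ hu, mul_mul_div_sqrt_sq hx]
    rw [indicator_of_mem hu, norm_smul, Real.norm_of_nonneg (Real.exp_nonneg _), neg_mul]
    gcongr
    exact hgM _ hu
  · rw [indicator_of_notMem hu, norm_zero]
    positivity

theorem tendsto_sqrt_smul_setIntegral_exp_neg_mul_smul [CompleteSpace E]
    (hs : MeasurableSet s) (hs₀ : s ∈ 𝓝 0) (hψ : Measurable ψ) (hg : StronglyMeasurable g)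
    (hc : 0 < c) (hψc : ∀ t ∈ s, c * t ^ 2 ≤ ψ t) (hψb : ψ ~[𝓝 0] fun t ↦ b * t ^ 2)
    (hgM : ∀ t ∈ s, ‖g t‖ ≤ M) (hg₀ : ContinuousAt g 0) :
    Tendsto (fun x : ℝ ↦ √x • ∫ t in s, Real.exp (-(x * ψ t)) • g t) atTop
      (𝓝 (√(π / b) • g 0)) := by
  let h (x : ℝ) : ℝ → E := s.indicator fun t ↦ Real.exp (-(x * ψ t)) • g t
  have hM : 0 ≤ M := (norm_nonneg _).trans (hgM 0 (mem_of_mem_nhds hs₀))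
  have hmeas (x : ℝ) : StronglyMeasurable (h x) :=
    (StronglyMeasurable.smul (by fun_prop) hg).indicator hs
  have hlim : Tendsto (fun x ↦ ∫ u, h x (u / √x)) atTop
      (𝓝 (∫ u : ℝ, Real.exp (-b * u ^ 2) • g 0)) := by
    refine tendsto_integral_filter_of_dominated_convergence
      (fun u ↦ Real.exp (-c * u ^ 2) * M) (.of_forall fun x ↦ ?_) ?_
      ((integrable_exp_neg_mul_sq hc).mul_const M)
      (.of_forall (tendsto_indicator_exp_neg_mul_smul_comp_div_sqrt hs₀ hψb hg₀))
    · exact ((hmeas x).comp_measurable (by fun_prop)).aestronglyMeasurable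
    · filter_upwards [eventually_gt_atTop 0] with x hx
      exact .of_forall (norm_indicator_exp_neg_mul_smul_comp_div_sqrt_le hψc hM hgM hx)
  rw [integral_smul_const, integral_gaussian] at hlim
  refine hlim.congr fun x ↦ ?_
  rw [Measure.integral_comp_div, abs_of_nonneg (Real.sqrt_nonneg x), integral_indicator hs]

end Laplace

lemma isEquivalent_one_sub_cos :
    (fun t ↦ 1 - Real.cos t) ~[𝓝 0] fun t ↦ (1 / 2) * t ^ 2 := by
  have hhalf : Tendsto (fun t : ℝ ↦ t / 2) (𝓝 0) (𝓝 0) :=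
    Continuous.tendsto' (by fun_prop) _ _ (zero_div 2)
  have hsin := (Real.isEquivalent_sin.comp_tendsto hhalf).pow 2
  refine ((IsEquivalent.refl (u := fun _ ↦ (2 : ℝ))).mul hsin).congr_left ?_ |>.congr_right ?_
  · refine .of_forall fun t ↦ ?_
    have hcos := Real.cos_two_mul' (t / 2)
    rw [mul_div_cancel₀ t two_ne_zero, Real.cos_sq'] at hcos
    simp only [Pi.mul_apply, Pi.pow_apply, Function.comp_apply, hcos]
    ring
  · refine .of_forall fun t ↦ ?_
    simp only [Pi.mul_apply, Pi.pow_apply, Function.comp_apply, id]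
    ring

theorem isEquivalent_besselI (k : ℕ) :
    besselI k ~[atTop] fun z ↦ Real.exp z / √(2 * π * z) := by
  have hlaplace := tendsto_sqrt_smul_setIntegral_exp_neg_mul_smul (s := Ioc (-π) π)
    (g := fun t ↦ Real.cos (k * t)) (c := 2 / π ^ 2) (M := 1) measurableSet_Ioc
    (Ioc_mem_nhds (neg_lt_zero.2 Real.pi_pos) Real.pi_pos) (by fun_prop)
    (Continuous.stronglyMeasurable (by fun_prop)) (by positivity)
    (fun t ht ↦ by linarith [Real.cos_le_one_sub_mul_cos_sq (abs_le.2 (Ioc_subset_Icc_self ht))])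
    isEquivalent_one_sub_cos (fun t _ ↦ Real.abs_cos_le_one _) (by fun_prop)
  have hfactor (z : ℝ) : besselI k z = Real.exp z * (2 * π)⁻¹ *
      ∫ t in Ioc (-π) π, Real.exp (-(z * (1 - Real.cos t))) • Real.cos (k * t) := by
    have hexp (t : ℝ) : Real.exp (z * Real.cos t) * Real.cos (k * t) =
        Real.exp z * (Real.exp (-(z * (1 - Real.cos t))) • Real.cos (k * t)) := by
      rw [smul_eq_mul, ← mul_assoc, ← Real.exp_add]
      ring_nf
    rw [besselI_eq_integral, intervalIntegral.integral_of_le (by linarith [Real.pi_pos])]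
    simp only [hexp, integral_const_mul]
    ring
  have hsqrt : √(2 * π) * (2 * π)⁻¹ * √(π / (1 / 2)) = 1 := by
    rw [div_div_eq_mul_div, div_one, mul_comm π, mul_right_comm,
      Real.mul_self_sqrt Real.two_pi_pos.le, mul_inv_cancel₀ Real.two_pi_pos.ne']
  refine (isEquivalent_iff_tendsto_one ?_).2 ?_
  · filter_upwards [eventually_gt_atTop 0] with z hz using by positivity
  · have hlim := hlaplace.const_mul (√(2 * π) * (2 * π)⁻¹)
    simp only [mul_zero, Real.cos_zero, smul_eq_mul, mul_one, hsqrt] at hlim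
    refine hlim.congr' (.of_forall fun z ↦ ?_)
    have := Real.exp_pos z
    simp only [Pi.div_apply, hfactor, smul_eq_mul, Real.sqrt_mul Real.two_pi_pos.le]
    field_simp

theorem tsum_poissonPMF_mul_poissonPMF_add (k : ℕ) {l m : ℝ} (hl : 0 < l) (hm : 0 ≤ m) :
    ∑' a : ℕ, poissonPMF l a * poissonPMF m (a + k) =
      √(m / l) ^ k * Real.exp (-(l + m)) * besselI k (2 * √(l * m)) := by
  rw [besselI, ← tsum_mul_left]
  congr 1 with a
  have hsqrt : √(m / l) * √(l * m) = m := by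
    rw [← Real.sqrt_mul (by positivity), div_mul_eq_mul_div, ← mul_assoc]
    field_simp
    exact Real.sqrt_sq hm
  have hpow : √(m / l) ^ k * √(l * m) ^ (2 * a + k) = l ^ a * m ^ (a + k) := calc
    _ = (√(l * m) ^ 2) ^ a * (√(m / l) * √(l * m)) ^ k := by ring
    _ = l ^ a * m ^ (a + k) := by rw [Real.sq_sqrt (by positivity), hsqrt]; ring
  rw [poissonPMF, poissonPMF, mul_div_cancel_left₀ _ two_ne_zero, neg_add, Real.exp_add]
  linear_combination (-Real.exp (-l) * Real.exp (-m) / (a ! * (a + k)!)) * hpow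

theorem isEquivalent_tsum_poissonPMF_mul_poissonPMF_add (k : ℕ) {α : Type*} {L : Filter α}
    {l m : α → ℝ} (hl : ∀ᶠ x in L, 0 < l x) (hlm : Tendsto (fun x ↦ l x * m x) L atTop) :
    (fun x ↦ ∑' a : ℕ, poissonPMF (l x) a * poissonPMF (m x) (a + k)) ~[L]
      fun x ↦ √(m x / l x) ^ k * Real.exp (-(√(l x) - √(m x)) ^ 2) /
        (2 * √(π * √(l x * m x))) := by
  have hatTop : Tendsto (fun x ↦ 2 * √(l x * m x)) L atTop :=
    (Real.tendsto_sqrt_atTop.comp hlm).const_mul_atTop two_pos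
  have hm : ∀ᶠ x in L, 0 < m x := by
    filter_upwards [hl, hlm.eventually_gt_atTop 0] with x hlx hlmx
      using pos_of_mul_pos_right hlmx hlx.le
  have hequiv := (IsEquivalent.refl
    (u := fun x ↦ √(m x / l x) ^ k * Real.exp (-(l x + m x)))).mul
    ((isEquivalent_besselI k).comp_tendsto hatTop)
  refine (hequiv.congr_left ?_).congr_right ?_
  · filter_upwards [hl, hm] with x hlx hmx
    exact (tsum_poissonPMF_mul_poissonPMF_add k hlx hmx.le).symm
  · filter_upwards [hl, hm] with x hlx hmx
    have hexp : Real.exp (-(l x + m x)) * Real.exp (2 * √(l x * m x)) =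
        Real.exp (-(√(l x) - √(m x)) ^ 2) := by
      rw [← Real.exp_add, sub_sq, Real.sq_sqrt hlx.le, Real.sq_sqrt hmx.le, Real.sqrt_mul hlx.le]
      ring_nf
    have hsqrt : √(2 * π * (2 * √(l x * m x))) = 2 * √(π * √(l x * m x)) := by
      rw [show 2 * π * (2 * √(l x * m x)) = 2 ^ 2 * (π * √(l x * m x)) by ring,
        Real.sqrt_mul (by positivity), Real.sqrt_sq zero_le_two]
    simp only [Pi.mul_apply, Function.comp_apply]
    rw [hsqrt, mul_div_assoc', mul_assoc, hexp]

theorem near_tie_probability_asymptotic_general (k : ℕ) {p q : ℝ} (hp : 0 < p) (hq : 0 < q) :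
    Tendsto
      (fun n : ℝ ↦
        (∑' a : ℕ, poissonPMF (n * p) a * poissonPMF (n * q) (a + k)) /
          ((q / p) ^ ((k : ℝ) / 2) * Real.exp (-(n * (√p - √q) ^ 2)) /
            (2 * (p * q) ^ ((1 : ℝ) / 4) * √(π * n))))
      atTop (𝓝 1) := by
  have hprod : Tendsto (fun n : ℝ ↦ n * p * (n * q)) atTop atTop :=
    (tendsto_id.atTop_mul_const hp).atTop_mul_atTop₀ (tendsto_id.atTop_mul_const hq)
  have hequiv := isEquivalent_tsum_poissonPMF_mul_poissonPMF_add k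
    ((eventually_gt_atTop 0).mono fun n hn ↦ mul_pos hn hp) hprod
  refine (isEquivalent_iff_tendsto_one ?_).1 (hequiv.congr_right ?_)
  · filter_upwards [eventually_gt_atTop 0] with n hn using by positivity
  · filter_upwards [eventually_gt_atTop 0] with n hn
    have hratio : √(n * q / (n * p)) ^ k = (q / p) ^ ((k : ℝ) / 2) := by
      rw [mul_div_mul_left _ _ hn.ne', Real.sqrt_eq_rpow, ← Real.rpow_mul_natCast (by positivity)]
      ring_nf
    have hexponent : (√(n * p) - √(n * q)) ^ 2 = n * (√p - √q) ^ 2 := by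
      rw [Real.sqrt_mul hn.le, Real.sqrt_mul hn.le, ← mul_sub, mul_pow, Real.sq_sqrt hn.le]
    have hroot : √√(p * q) = (p * q) ^ ((1 : ℝ) / 4) := by
      rw [Real.sqrt_eq_rpow, Real.sqrt_eq_rpow, ← Real.rpow_mul (by positivity)]
      norm_num
    have hsqrt : √(π * √(n * p * (n * q))) = (p * q) ^ ((1 : ℝ) / 4) * √(π * n) := by
      rw [mul_mul_mul_comm, Real.sqrt_mul (mul_self_nonneg n), Real.sqrt_mul_self hn.le,
        ← mul_assoc, mul_comm, Real.sqrt_mul (by positivity), hroot]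
    rw [hratio, hexponent, hsqrt, mul_assoc 2]

/-- **Near-tie asymptotic underlying Proposition 5.** Fix `p, q > 0` and let `A_n`, `B_n` be
independent Poisson with means `np` and `nq`. Then as `n → ∞`,
`Pr(A_n = B_n - 1) ∼ (q/p)^{1/2} e^{-n(√p-√q)²} / (2 (pq)^{1/4} √(πn))`, where
`Pr(A_n = B_n - 1) = Σ_{a=0}^∞ f_{np}(a) f_{nq}(a+1)` and `∼` means the ratio tends to 1. -/
theorem near_tie_probability_asymptotic (p q : ℝ) (hp : 0 < p) (hq : 0 < q) :
    Filter.Tendsto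
      (fun n : ℝ =>
        (∑' a : ℕ, poissonPMF (n * p) a * poissonPMF (n * q) (a + 1))
          / ((q / p) ^ ((1 : ℝ) / 2) * Real.exp (-(n * (Real.sqrt p - Real.sqrt q) ^ 2))
              / (2 * (p * q) ^ ((1 : ℝ) / 4) * Real.sqrt (Real.pi * n))))
      Filter.atTop (nhds 1) := by
  simpa only [Nat.cast_one] using near_tie_probability_asymptotic_general 1 hp hq
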